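/- arXiv:2109.10881 — 4 statements merged into one kernel-verified Lean document; each statement's English description precedes it below -/
import Mathlib

section
/- Let Ω ⊆ ℍ be open, θ ∈ [0,2π), u ∈ ℍ, and let f : Ω → ℍ be of class C¹. Then for every z ∈ Ω, ${}^θ𝒟[\,e^{⟨u,·⟩_θ} f\,](z) = e^{⟨u,z⟩_θ}\,\big({}^θ𝒟 f(z) + u\,f(z)\big) = e^{⟨u,z⟩_θ}\,{}^θ_u𝒟 f(z)$, where $e^{⟨u,z⟩_θ}$ denotes the real exponential of $⟨u,z⟩_θ$. -/
open MeasureTheory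

noncomputable section

/-- The real quaternions `ℍ`. -/
abbrev H4 : Type := Quaternion ℝ

instance : MeasurableSpace H4 := borel _
instance : BorelSpace H4 := ⟨rfl⟩

/-- The quaternion unit `i`. -/
def qI : H4 := ⟨0, 1, 0, 0⟩
/-- The quaternion unit `j`. -/
def qJ : H4 := ⟨0, 0, 1, 0⟩
/-- `e^{iθ} = cos θ + (sin θ) i` as a quaternion. -/
def eIθ (θ : ℝ) : H4 := ⟨Real.cos θ, Real.sin θ, 0, 0⟩
/-- The basis direction `i e^{iθ} j`. -/
def e2 (θ : ℝ) : H4 := qI * eIθ θ * qJ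
/-- The basis direction `e^{iθ} j`. -/
def e3 (θ : ℝ) : H4 := eIθ θ * qJ

/-- Third θ-coordinate of a quaternion `z = x₀ + x₁ i + x₂ (i e^{iθ} j) + x₃ (e^{iθ} j)`. -/
def x2θ (θ : ℝ) (z : H4) : ℝ := -z.imJ * Real.sin θ + z.imK * Real.cos θ
/-- Fourth θ-coordinate of a quaternion. -/
def x3θ (θ : ℝ) (z : H4) : ℝ := z.imJ * Real.cos θ + z.imK * Real.sin θ

/-- The θ-inner product `⟨u,z⟩_θ`: the dot product of θ-coordinates. -/
def innerθ (θ : ℝ) (u z : H4) : ℝ :=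
  u.re * z.re + u.imI * z.imI + x2θ θ u * x2θ θ z + x3θ θ u * x3θ θ z

/-- Left θ-Cauchy–Riemann operator
`{}^θ𝒟 f = ∂f/∂x₀ + i ∂f/∂x₁ + (i e^{iθ} j) ∂f/∂x₂ + (e^{iθ} j) ∂f/∂x₃`. -/
def Dl (θ : ℝ) (f : H4 → H4) (z : H4) : H4 :=
  fderiv ℝ f z 1 + qI * fderiv ℝ f z qI + e2 θ * fderiv ℝ f z (e2 θ) +
    e3 θ * fderiv ℝ f z (e3 θ)

/-- Left (θ,u)-Cauchy–Riemann operator `{}^θ_u𝒟 f = {}^θ𝒟 f + u f`. -/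
def Dlu (θ : ℝ) (u : H4) (f : H4 → H4) (z : H4) : H4 := Dl θ f z + u * f z

/-- Right θ-Cauchy–Riemann operator. -/
def Dr (θ : ℝ) (f : H4 → H4) (z : H4) : H4 :=
  fderiv ℝ f z 1 + fderiv ℝ f z qI * qI + fderiv ℝ f z (e2 θ) * e2 θ +
    fderiv ℝ f z (e3 θ) * e3 θ

/-- Right (θ,u)-Cauchy–Riemann operator `{}^θ𝒟_{r,u} f = {}^θ𝒟_r f + f u`. -/
def Dru (θ : ℝ) (u : H4) (f : H4 → H4) (z : H4) : H4 := Dr θ f z + f z * u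

/-- Embedding of ℂ into the quaternions, `ℂ ≅ ℝ + ℝi ⊂ ℍ`. -/
def toH (a : ℂ) : H4 := ⟨a.re, a.im, 0, 0⟩

/-- First complex θ-component of a quaternion: `z₁ = x₀ + x₁ i`. -/
def c1 (z : H4) : ℂ := ⟨z.re, z.imI⟩
/-- Second complex θ-component of a quaternion: `z₂ = x₂ + x₃ i`. -/
def c2 (θ : ℝ) (z : H4) : ℂ := ⟨x2θ θ z, x3θ θ z⟩

/-- Wirtinger operator `∂/∂z̄₁ = ∂/∂x₀ + i ∂/∂x₁` on ℂ-valued functions. -/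
def db1 (f : H4 → ℂ) (z : H4) : ℂ := fderiv ℝ f z 1 + Complex.I * fderiv ℝ f z qI
/-- Wirtinger operator `∂/∂z̄₂ = ∂/∂x₂ + i ∂/∂x₃` on ℂ-valued functions. -/
def db2 (θ : ℝ) (f : H4 → ℂ) (z : H4) : ℂ :=
  fderiv ℝ f z (e2 θ) + Complex.I * fderiv ℝ f z (e3 θ)
/-- Wirtinger operator `∂/∂z₂ = ∂/∂x₂ − i ∂/∂x₃` on ℂ-valued functions. -/
def dz2 (θ : ℝ) (f : H4 → ℂ) (z : H4) : ℂ :=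
  fderiv ℝ f z (e2 θ) - Complex.I * fderiv ℝ f z (e3 θ)

/-- `e^{iθ}` as a complex number. -/
def cexpI (θ : ℝ) : ℂ := ⟨Real.cos θ, Real.sin θ⟩

set_option linter.unusedSimpArgs false

/-- The linear functional given by the θ-inner product with `u`. -/
def innerθL (θ : ℝ) (u : H4) : H4 →ₗ[ℝ] ℝ where
  toFun := innerθ θ u
  map_add' x y := by simp [innerθ, x2θ, x3θ]; ring
  map_smul' c x := by simp [innerθ, x2θ, x3θ]; ring

theorem hasFDerivAt_innerθ (θ : ℝ) (u z : H4) :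
    HasFDerivAt (innerθ θ u) (LinearMap.toContinuousLinearMap (innerθL θ u)) z :=
  (LinearMap.toContinuousLinearMap (innerθL θ u)).hasFDerivAt

theorem qI_re : qI.re = 0 := rfl
theorem qI_imI : qI.imI = 1 := rfl
theorem qI_imJ : qI.imJ = 0 := rfl
theorem qI_imK : qI.imK = 0 := rfl
theorem qJ_re : qJ.re = 0 := rfl
theorem qJ_imI : qJ.imI = 0 := rfl
theorem qJ_imJ : qJ.imJ = 1 := rfl
theorem qJ_imK : qJ.imK = 0 := rfl
theorem eIθ_re (θ : ℝ) : (eIθ θ).re = Real.cos θ := rfl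
theorem eIθ_imI (θ : ℝ) : (eIθ θ).imI = Real.sin θ := rfl
theorem eIθ_imJ (θ : ℝ) : (eIθ θ).imJ = 0 := rfl
theorem eIθ_imK (θ : ℝ) : (eIθ θ).imK = 0 := rfl
theorem one_reH : (1 : H4).re = 1 := rfl
theorem one_imIH : (1 : H4).imI = 0 := rfl
theorem one_imJH : (1 : H4).imJ = 0 := rfl
theorem one_imKH : (1 : H4).imK = 0 := rfl
theorem e2_re (θ : ℝ) : (e2 θ).re = 0 := by
  simp [e2, Quaternion.re_mul, Quaternion.imI_mul, Quaternion.imJ_mul, Quaternion.imK_mul,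
    qI_re, qI_imI, qI_imJ, qI_imK, qJ_re, qJ_imI, qJ_imJ, qJ_imK, eIθ_re, eIθ_imI, eIθ_imJ, eIθ_imK]
theorem e2_imI (θ : ℝ) : (e2 θ).imI = 0 := by
  simp [e2, Quaternion.re_mul, Quaternion.imI_mul, Quaternion.imJ_mul, Quaternion.imK_mul,
    qI_re, qI_imI, qI_imJ, qI_imK, qJ_re, qJ_imI, qJ_imJ, qJ_imK, eIθ_re, eIθ_imI, eIθ_imJ, eIθ_imK]
theorem e2_imJ (θ : ℝ) : (e2 θ).imJ = -Real.sin θ := by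
  simp [e2, Quaternion.re_mul, Quaternion.imI_mul, Quaternion.imJ_mul, Quaternion.imK_mul,
    qI_re, qI_imI, qI_imJ, qI_imK, qJ_re, qJ_imI, qJ_imJ, qJ_imK, eIθ_re, eIθ_imI, eIθ_imJ, eIθ_imK]
theorem e2_imK (θ : ℝ) : (e2 θ).imK = Real.cos θ := by
  simp [e2, Quaternion.re_mul, Quaternion.imI_mul, Quaternion.imJ_mul, Quaternion.imK_mul,
    qI_re, qI_imI, qI_imJ, qI_imK, qJ_re, qJ_imI, qJ_imJ, qJ_imK, eIθ_re, eIθ_imI, eIθ_imJ, eIθ_imK]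
theorem e3_re (θ : ℝ) : (e3 θ).re = 0 := by
  simp [e3, Quaternion.re_mul, Quaternion.imI_mul, Quaternion.imJ_mul, Quaternion.imK_mul,
    qI_re, qI_imI, qI_imJ, qI_imK, qJ_re, qJ_imI, qJ_imJ, qJ_imK, eIθ_re, eIθ_imI, eIθ_imJ, eIθ_imK]
theorem e3_imI (θ : ℝ) : (e3 θ).imI = 0 := by
  simp [e3, Quaternion.re_mul, Quaternion.imI_mul, Quaternion.imJ_mul, Quaternion.imK_mul,
    qI_re, qI_imI, qI_imJ, qI_imK, qJ_re, qJ_imI, qJ_imJ, qJ_imK, eIθ_re, eIθ_imI, eIθ_imJ, eIθ_imK]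
theorem e3_imJ (θ : ℝ) : (e3 θ).imJ = Real.cos θ := by
  simp [e3, Quaternion.re_mul, Quaternion.imI_mul, Quaternion.imJ_mul, Quaternion.imK_mul,
    qI_re, qI_imI, qI_imJ, qI_imK, qJ_re, qJ_imI, qJ_imJ, qJ_imK, eIθ_re, eIθ_imI, eIθ_imJ, eIθ_imK]
theorem e3_imK (θ : ℝ) : (e3 θ).imK = Real.sin θ := by
  simp [e3, Quaternion.re_mul, Quaternion.imI_mul, Quaternion.imJ_mul, Quaternion.imK_mul,
    qI_re, qI_imI, qI_imJ, qI_imK, qJ_re, qJ_imI, qJ_imJ, qJ_imK, eIθ_re, eIθ_imI, eIθ_imJ, eIθ_imK]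

theorem innerθ_one (θ : ℝ) (u : H4) : innerθ θ u 1 = u.re := by
  simp [innerθ, x2θ, x3θ, one_reH, one_imIH, one_imJH, one_imKH]

theorem innerθ_qI (θ : ℝ) (u : H4) : innerθ θ u qI = u.imI := by
  simp [innerθ, x2θ, x3θ, qI_re, qI_imI, qI_imJ, qI_imK]

theorem innerθ_e2 (θ : ℝ) (u : H4) : innerθ θ u (e2 θ) = x2θ θ u := by
  simp only [innerθ, x2θ, x3θ, e2_re, e2_imI, e2_imJ, e2_imK]
  linear_combination (-u.imJ * Real.sin θ + u.imK * Real.cos θ) * Real.sin_sq_add_cos_sq θ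

theorem innerθ_e3 (θ : ℝ) (u : H4) : innerθ θ u (e3 θ) = x3θ θ u := by
  simp only [innerθ, x2θ, x3θ, e3_re, e3_imI, e3_imJ, e3_imK]
  linear_combination (u.imJ * Real.cos θ + u.imK * Real.sin θ) * Real.sin_sq_add_cos_sq θ

theorem decompθ (θ : ℝ) (u : H4) :
    u.re • (1 : H4) + u.imI • qI + x2θ θ u • e2 θ + x3θ θ u • e3 θ = u := by
  ext
  · simp [qI_re, qI_imI, qI_imJ, qI_imK, one_reH, one_imIH, one_imJH, one_imKH,
      e2_re, e2_imI, e2_imJ, e2_imK, e3_re, e3_imI, e3_imJ, e3_imK]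
  · simp [qI_re, qI_imI, qI_imJ, qI_imK, one_reH, one_imIH, one_imJH, one_imKH,
      e2_re, e2_imI, e2_imJ, e2_imK, e3_re, e3_imI, e3_imJ, e3_imK]
  · simp [x2θ, x3θ, qI_re, qI_imI, qI_imJ, qI_imK, one_reH, one_imIH, one_imJH, one_imKH,
      e2_re, e2_imI, e2_imJ, e2_imK, e3_re, e3_imI, e3_imJ, e3_imK]
    linear_combination u.imJ * Real.sin_sq_add_cos_sq θ
  · simp [x2θ, x3θ, qI_re, qI_imI, qI_imJ, qI_imK, one_reH, one_imIH, one_imJH, one_imKH,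
      e2_re, e2_imI, e2_imJ, e2_imK, e3_re, e3_imI, e3_imJ, e3_imK]
    linear_combination u.imK * Real.sin_sq_add_cos_sq θ

theorem fderiv_exp_smul (θ : ℝ) (u z : H4) (f : H4 → H4) (hf : DifferentiableAt ℝ f z) (v : H4) :
    fderiv ℝ (fun w => Real.exp (innerθ θ u w) • f w) z v
      = Real.exp (innerθ θ u z) • (fderiv ℝ f z v + innerθ θ u v • f z) := by
  have h := ((hasFDerivAt_innerθ θ u z).exp).fun_smul hf.hasFDerivAt
  rw [h.fderiv]
  have hv : innerθL θ u v = innerθ θ u v := rfl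
  simp [hv, smul_smul]

theorem Dl_exp (θ : ℝ) (u z : H4) (f : H4 → H4) (hf : DifferentiableAt ℝ f z) :
    Dl θ (fun w => Real.exp (innerθ θ u w) • f w) z
      = Real.exp (innerθ θ u z) • (Dl θ f z + u * f z) := by
  have hu : u * f z = u.re • f z + u.imI • (qI * f z) + x2θ θ u • (e2 θ * f z)
      + x3θ θ u • (e3 θ * f z) := by
    conv_lhs => rw [← decompθ θ u]
    simp only [add_mul, smul_mul_assoc, one_mul]
  unfold Dl
  simp only [fderiv_exp_smul θ u z f hf, innerθ_one, innerθ_qI, innerθ_e2, innerθ_e3, hu,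
    mul_add, mul_smul_comm, smul_add]
  abel

/-- `{}^θ𝒟[e^{⟨u,·⟩_θ} f](z) = e^{⟨u,z⟩_θ}({}^θ𝒟 f(z) + u f(z)) = e^{⟨u,z⟩_θ} {}^θ_u𝒟 f(z)`. -/
theorem statement0 (Ω : Set H4) (hΩ : IsOpen Ω) (θ : ℝ) (hθ : θ ∈ Set.Ico 0 (2 * Real.pi))
    (u : H4) (f : H4 → H4) (hf : ContDiffOn ℝ 1 f Ω) :
    ∀ z ∈ Ω,
      Dl θ (fun w => Real.exp (innerθ θ u w) • f w) z
          = Real.exp (innerθ θ u z) • (Dl θ f z + u * f z) ∧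
      Dl θ (fun w => Real.exp (innerθ θ u w) • f w) z
          = Real.exp (innerθ θ u z) • Dlu θ u f z := by
  intro z hz
  have hd : DifferentiableAt ℝ f z :=
    (hf.differentiableOn (by norm_num)).differentiableAt (hΩ.mem_nhds hz)
  exact ⟨Dl_exp θ u z f hd, Dl_exp θ u z f hd⟩

end
end

section
/- Let Ω ⊆ ℍ be open, θ ∈ [0,2π), and u = u₁ + (ie^{iθ}j)u₂ ∈ ℍ with u₁, u₂ ∈ ℂ. Let f = f₁ + f₂ j with f₁, f₂ : Ω → ℂ of class C¹. Then ${}^θ_u𝒟 f = 0$ on Ω if and only if both ∂f₁/∂z̄₁ + u₁ f₁ = i e^{iθ}\,\overline{(∂f₂/∂z̄₂ + u₂ f₂)} and ∂f₁/∂z̄₂ + u₂ f₁ = −i e^{iθ}\,\overline{(∂f₂/∂z̄₁ + u₁ f₂)} hold on Ω. -/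
open MeasureTheory

noncomputable section

theorem toH_re (a : ℂ) : (toH a).re = a.re := rfl
theorem toH_imI (a : ℂ) : (toH a).imI = a.im := rfl
theorem toH_imJ (a : ℂ) : (toH a).imJ = 0 := rfl
theorem toH_imK (a : ℂ) : (toH a).imK = 0 := rfl

theorem H4_eq_zero (a : H4) : a = 0 ↔ a.re = 0 ∧ a.imI = 0 ∧ a.imJ = 0 ∧ a.imK = 0 :=
  Quaternion.ext_iff

/-- `toH` as a continuous real-linear map. -/
def toHL : ℂ →L[ℝ] H4 :=
  LinearMap.toContinuousLinearMap
    { toFun := toH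
      map_add' := by intro a b; ext <;> simp [toH_re, toH_imI, toH_imJ, toH_imK]
      map_smul' := by intro a b; ext <;> simp [toH_re, toH_imI, toH_imJ, toH_imK] }

theorem toHL_apply (a : ℂ) : toHL a = toH a := rfl

theorem fderiv_pair (f₁ f₂ : H4 → ℂ) (z v : H4) (h₁ : DifferentiableAt ℝ f₁ z)
    (h₂ : DifferentiableAt ℝ f₂ z) :
    fderiv ℝ (fun w => toH (f₁ w) + toH (f₂ w) * qJ) z v
      = toH (fderiv ℝ f₁ z v) + toH (fderiv ℝ f₂ z v) * qJ := by
  have a₁ : HasFDerivAt (fun w => toH (f₁ w)) (toHL.comp (fderiv ℝ f₁ z)) z :=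
    toHL.hasFDerivAt.comp z h₁.hasFDerivAt
  have a₂ : HasFDerivAt (fun w => toH (f₂ w)) (toHL.comp (fderiv ℝ f₂ z)) z :=
    toHL.hasFDerivAt.comp z h₂.hasFDerivAt
  have a₃ : HasFDerivAt (fun w => toH (f₁ w) + toH (f₂ w) * qJ) _ z :=
    a₁.add (a₂.mul_const' qJ)
  rw [a₃.fderiv]
  simp [toHL_apply]

/-- The pointwise algebraic equivalence. -/
theorem alg_iff (c s : ℝ) (h : c ^ 2 + s ^ 2 = 1) (P Q R S : ℂ) :
    (P.re = -s * S.re + c * S.im ∧ P.im = c * S.re + s * S.im ∧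
      Q.re = s * R.re - c * R.im ∧ Q.im = -c * R.re - s * R.im) ↔
    (P = Complex.I * ⟨c, s⟩ * (starRingEnd ℂ) S ∧
      R = -(Complex.I * ⟨c, s⟩) * (starRingEnd ℂ) Q) := by
  simp only [Complex.ext_iff, Complex.mul_re, Complex.mul_im, Complex.neg_re, Complex.neg_im,
    Complex.I_re, Complex.I_im, Complex.conj_re, Complex.conj_im]
  constructor
  · rintro ⟨h1, h2, h3, h4⟩
    refine ⟨⟨by linarith, by linarith⟩, ?_, ?_⟩
    · rw [h3, h4]; linear_combination (-R.re) * h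
    · rw [h3, h4]; linear_combination (-R.im) * h
  · rintro ⟨⟨h1, h2⟩, h3, h4⟩
    refine ⟨by linarith, by linarith, ?_, ?_⟩
    · rw [h3, h4]; linear_combination (-Q.re) * h
    · rw [h3, h4]; linear_combination (-Q.im) * h

/-- for `u = u₁ + (ie^{iθ}j)u₂` and `f = f₁ + f₂ j`, `{}^θ_u𝒟 f = 0` on Ω iff the
two complex equations hold on Ω. -/
theorem statement2 (Ω : Set H4) (hΩ : IsOpen Ω) (θ : ℝ) (hθ : θ ∈ Set.Ico 0 (2 * Real.pi))
    (u₁ u₂ : ℂ) (f₁ f₂ : H4 → ℂ)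
    (hf₁ : ContDiffOn ℝ 1 f₁ Ω) (hf₂ : ContDiffOn ℝ 1 f₂ Ω) :
    (∀ z ∈ Ω, Dlu θ (toH u₁ + e2 θ * toH u₂) (fun w => toH (f₁ w) + toH (f₂ w) * qJ) z = 0) ↔
    (∀ z ∈ Ω,
      db1 f₁ z + u₁ * f₁ z
          = Complex.I * cexpI θ * (starRingEnd ℂ) (db2 θ f₂ z + u₂ * f₂ z) ∧
      db2 θ f₁ z + u₂ * f₁ z
          = -(Complex.I * cexpI θ) * (starRingEnd ℂ) (db1 f₂ z + u₁ * f₂ z)) := by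
  refine forall₂_congr fun z hz => ?_
  have d₁ : DifferentiableAt ℝ f₁ z :=
    (hf₁.differentiableOn (by norm_num)).differentiableAt (hΩ.mem_nhds hz)
  have d₂ : DifferentiableAt ℝ f₂ z :=
    (hf₂.differentiableOn (by norm_num)).differentiableAt (hΩ.mem_nhds hz)
  rw [cexpI, ← alg_iff _ _ (Real.cos_sq_add_sin_sq θ)]
  simp only [Dlu, Dl, fderiv_pair _ _ _ _ d₁ d₂, db1, db2]
  generalize fderiv ℝ f₁ z 1 = a0
  generalize fderiv ℝ f₁ z qI = a1
  generalize fderiv ℝ f₁ z (e2 θ) = a2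
  generalize fderiv ℝ f₁ z (e3 θ) = a3
  generalize fderiv ℝ f₂ z 1 = b0
  generalize fderiv ℝ f₂ z qI = b1
  generalize fderiv ℝ f₂ z (e2 θ) = b2
  generalize fderiv ℝ f₂ z (e3 θ) = b3
  generalize f₁ z = g1
  generalize f₂ z = g2
  rw [H4_eq_zero]
  simp [e2, e3, qI_re, qI_imI, qI_imJ, qI_imK, qJ_re, qJ_imI, qJ_imJ, qJ_imK, eIθ_re,
    eIθ_imI, eIθ_imJ, eIθ_imK, toH_re, toH_imI, toH_imJ, toH_imK]
  constructor
  · rintro ⟨h1, h2, h3, h4⟩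
    refine ⟨?_, ?_, ?_, ?_⟩
    · linear_combination h1
    · linear_combination h2
    · linear_combination h3
    · linear_combination h4
  · rintro ⟨h1, h2, h3, h4⟩
    refine ⟨?_, ?_, ?_, ?_⟩
    · linear_combination h1
    · linear_combination h2
    · linear_combination h3
    · linear_combination h4

end
end

section
/- Let Ξ, Ω ⊆ ℍ be domains, θ ∈ [0,2π), and let T : Ξ → Ω be a C¹ bijection. Let A : Ξ → ℍ and B : Ω → ℍ be C¹ functions, nowhere zero, satisfying the chain rule ${}^θ𝒟_z[\,A·(f∘T)\,] = (B∘T)·(({}^θ𝒟 f)∘T)$ on Ξ for every f ∈ C¹(Ω,ℍ). Fix u, v ∈ ℍ and set δ_T(ζ) := B(ζ)^{−1}·v·A(T^{−1}(ζ)) for ζ ∈ Ω. Then for every f ∈ C¹(Ω,ℍ): ${}^θ𝒟 f + δ_T·f = 0$ on Ω if and only if the function $z ↦ e^{⟨v−u,z⟩_θ}A(z)\,f(T(z))$ satisfies ${}^θ𝒟 g + u·g = 0$ on Ξ. -/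
open MeasureTheory

noncomputable section

theorem innerθ_eq_inner (θ : ℝ) (u z : H4) : innerθ θ u z = inner ℝ u z := by
  have h := Real.sin_sq_add_cos_sq θ
  simp only [innerθ, x2θ, x3θ, Quaternion.inner_def, Quaternion.re_mul, Quaternion.re_star,
    Quaternion.imI_star, Quaternion.imJ_star, Quaternion.imK_star]
  linear_combination (u.imJ * z.imJ + u.imK * z.imK) * h

theorem sum_innerθ (θ : ℝ) (w : H4) :
    (innerθ θ w 1) • (1 : H4) + (innerθ θ w qI) • qI + (innerθ θ w (e2 θ)) • e2 θ
      + (innerθ θ w (e3 θ)) • e3 θ = w := by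
  have h := Real.sin_sq_add_cos_sq θ
  obtain ⟨i0, i1, i2, i3⟩ : qI.re = 0 ∧ qI.imI = 1 ∧ qI.imJ = 0 ∧ qI.imK = 0 :=
    ⟨rfl, rfl, rfl, rfl⟩
  obtain ⟨j0, j1, j2, j3⟩ : qJ.re = 0 ∧ qJ.imI = 0 ∧ qJ.imJ = 1 ∧ qJ.imK = 0 :=
    ⟨rfl, rfl, rfl, rfl⟩
  obtain ⟨c0, c1, c2, c3⟩ : (eIθ θ).re = Real.cos θ ∧ (eIθ θ).imI = Real.sin θ ∧
      (eIθ θ).imJ = 0 ∧ (eIθ θ).imK = 0 := ⟨rfl, rfl, rfl, rfl⟩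
  obtain ⟨o0, o1, o2, o3⟩ : (1 : H4).re = 1 ∧ (1 : H4).imI = 0 ∧
      (1 : H4).imJ = 0 ∧ (1 : H4).imK = 0 := ⟨rfl, rfl, rfl, rfl⟩
  ext <;> simp only [innerθ, x2θ, x3θ, e2, e3, Quaternion.re_add, Quaternion.imI_add,
    Quaternion.imJ_add, Quaternion.imK_add, Quaternion.re_smul, Quaternion.imI_smul,
    Quaternion.imJ_smul, Quaternion.imK_smul, Quaternion.re_mul, Quaternion.imI_mul,
    Quaternion.imJ_mul, Quaternion.imK_mul, i0, i1, i2, i3, j0, j1, j2, j3, c0, c1, c2, c3,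
    o0, o1, o2, o3, smul_eq_mul]
  · ring
  · ring
  · linear_combination (w.imJ * (Real.sin θ ^ 2 + Real.cos θ ^ 2 + 1)) * h
  · linear_combination (w.imK * (Real.sin θ ^ 2 + Real.cos θ ^ 2 + 1)) * h

theorem Dl_exp_smul (θ : ℝ) (w : H4) (h : H4 → H4) (z : H4) (hh : DifferentiableAt ℝ h z) :
    Dl θ (fun y => Real.exp (innerθ θ w y) • h y) z
      = Real.exp (innerθ θ w z) • (Dl θ h z + w * h z) := by
  have h1 : HasFDerivAt (fun y => innerθ θ w y) (innerSL ℝ w) z := by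
    have : (fun y => innerθ θ w y) = fun y => innerSL ℝ w y := by
      funext y; rw [innerθ_eq_inner]; rfl
    rw [this]
    exact (innerSL ℝ w).hasFDerivAt
  have h2 := (h1.exp.smul hh.hasFDerivAt).fderiv
  have h3 : ∀ d : H4, fderiv ℝ (fun y => Real.exp (innerθ θ w y) • h y) z d
      = Real.exp (innerθ θ w z) • (fderiv ℝ h z d + innerθ θ w d • h z) := by
    intro d
    have := congrArg (fun L => L d) h2
    refine this.trans ?_
    simp [innerθ_eq_inner, smul_smul]
  have h4 := congrArg (fun q => q * h z) (sum_innerθ θ w)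
  simp only [add_mul, smul_mul_assoc, one_mul] at h4
  simp only [Dl, h3]
  conv_rhs => rw [← h4]
  simp only [mul_smul_comm, mul_add, smul_add]
  abel

/-- `{}^θ𝒟 f + δ_T f = 0` on Ω iff `z ↦ e^{⟨v−u,z⟩_θ} A(z) f(T z)` is a null
solution of `{}^θ𝒟 + u` on Ξ, with `δ_T(ζ) = B(ζ)⁻¹ v A(T⁻¹ ζ)`. -/
theorem statement5 (Ξ Ω : Set H4) (hΞo : IsOpen Ξ) (hΞc : IsConnected Ξ)
    (hΩo : IsOpen Ω) (hΩc : IsConnected Ω) (θ : ℝ) (hθ : θ ∈ Set.Ico 0 (2 * Real.pi))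
    (T : H4 → H4) (hT : ContDiffOn ℝ 1 T Ξ) (hTbij : Set.BijOn T Ξ Ω)
    (S : H4 → H4) (hS : ∀ z ∈ Ξ, S (T z) = z) (hS' : ∀ ζ ∈ Ω, T (S ζ) = ζ)
    (A B : H4 → H4) (hA : ContDiffOn ℝ 1 A Ξ) (hB : ContDiffOn ℝ 1 B Ω)
    (hA0 : ∀ z ∈ Ξ, A z ≠ 0) (hB0 : ∀ ζ ∈ Ω, B ζ ≠ 0)
    (hchain : ∀ f : H4 → H4, ContDiffOn ℝ 1 f Ω →
      ∀ z ∈ Ξ, Dl θ (fun w => A w * f (T w)) z = B (T z) * Dl θ f (T z))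
    (u v : H4) (f : H4 → H4) (hf : ContDiffOn ℝ 1 f Ω) :
    (∀ ζ ∈ Ω, Dl θ f ζ + ((B ζ)⁻¹ * v * A (S ζ)) * f ζ = 0) ↔
    (∀ z ∈ Ξ,
      Dlu θ u (fun w => Real.exp (innerθ θ (v - u) w) • (A w * f (T w))) z = 0) := by
  have key : ∀ z ∈ Ξ,
      Dlu θ u (fun w => Real.exp (innerθ θ (v - u) w) • (A w * f (T w))) z
      = Real.exp (innerθ θ (v - u) z) • (B (T z) *
        (Dl θ f (T z) + ((B (T z))⁻¹ * v * A (S (T z))) * f (T z))) := by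
    intro z hz
    have hTz := hTbij.mapsTo hz
    have dA : DifferentiableAt ℝ A z :=
      (hA.differentiableOn one_ne_zero).differentiableAt (hΞo.mem_nhds hz)
    have dT : DifferentiableAt ℝ T z :=
      (hT.differentiableOn one_ne_zero).differentiableAt (hΞo.mem_nhds hz)
    have df : DifferentiableAt ℝ f (T z) :=
      (hf.differentiableOn one_ne_zero).differentiableAt (hΩo.mem_nhds hTz)
    have dh : DifferentiableAt ℝ (fun w => A w * f (T w)) z := dA.mul (df.comp z dT)
    rw [Dlu, Dl_exp_smul θ (v - u) _ z dh, hchain f hf z hz, hS z hz, mul_add]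
    have : B (T z) * ((B (T z))⁻¹ * v * A z * f (T z)) = v * (A z * f (T z)) := by
      simp only [← mul_assoc]
      rw [mul_inv_cancel₀ (hB0 _ hTz), one_mul]
    rw [this, mul_smul_comm, ← smul_add, sub_mul]
    congr 1
    abel
  constructor
  · intro h z hz
    rw [key z hz, h _ (hTbij.mapsTo hz), mul_zero, smul_zero]
  · intro h ζ hζ
    obtain ⟨z, hz, rfl⟩ := hTbij.surjOn hζ
    have := h z hz
    rw [key z hz] at this
    rcases smul_eq_zero.1 this with h0 | h0
    · exact absurd h0 (Real.exp_ne_zero _)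
    · exact (mul_eq_zero.1 h0).resolve_left (hB0 _ hζ)

end
end

section
/- Let Ω ⊆ ℍ be a domain, θ ∈ [0,2π), u ∈ ℍ. Let z ∈ Ω and ε > 0 be such that the closed ball $\overline{B(z,ε)}$ ⊆ Ω. Then there exists a constant k > 0 (depending only on θ, u, z, ε) such that for every f ∈ C¹(Ω,ℍ) with ${}^θ_u𝒟 f = 0$ on Ω one has $|f(z)| ≤ k\,\big(∫_{B(z,ε)} |f(ζ)|²\,dμ_ζ\big)^{1/2}$. -/
open MeasureTheory

noncomputable section

lemma hcs_w {w : H4 → ℝ} {r : ℝ} (hw0 : ∀ y, r ≤ ‖y‖ → w y = 0) : HasCompactSupport w := by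
  refine HasCompactSupport.intro (isCompact_closedBall (0:H4) r) ?_
  intro x hx
  apply hw0
  simp at hx
  exact hx.le

/-- integration by parts gives symmetry -/
lemma by_parts {w : H4 → ℝ} {r : ℝ} (hw : ContDiff ℝ 1 w) (hw0 : ∀ y, r ≤ ‖y‖ → w y = 0)
    {c : H4 → ℝ} (hc : ∀ y v, fderiv ℝ w y v = c y * inner ℝ y v)
    {G : H4 → H4} (hG : ContDiff ℝ 1 G) {t : ℝ} {a b : H4} (hab : inner ℝ b a = (0:ℝ)) :
    t • ∫ y, (w y * inner ℝ y a) • fderiv ℝ G (t • y) b =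
      - ∫ y, (c y * inner ℝ y b * inner ℝ y a) • G (t • y) := by
  have hcs := hcs_w hw0
  have hf : ContDiff ℝ 1 (fun y : H4 => w y * inner ℝ y a) :=
    hw.mul (contDiff_id.inner ℝ contDiff_const)
  have hg : ContDiff ℝ 1 (fun y : H4 => G (t • y)) := by fun_prop
  have hfs : HasCompactSupport (fun y : H4 => w y * inner ℝ y a) := hcs.mul_right
  have hdf : ∀ y, fderiv ℝ (fun y : H4 => w y * inner ℝ y a) y b =
      c y * inner ℝ y b * inner ℝ y a := by
    intro y
    have h1 : HasFDerivAt (fun y : H4 => inner ℝ y a) (innerSL ℝ a) y := by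
      have := (innerSL ℝ a).hasFDerivAt (x := y)
      refine this.congr_of_eventuallyEq (Filter.Eventually.of_forall fun y => ?_)
      simp [real_inner_comm]
    have h2 := ((hw.differentiable one_ne_zero) y).hasFDerivAt.mul h1
    have h3 : inner ℝ a b = (0:ℝ) := by rw [real_inner_comm]; exact hab
    have h4 : fderiv ℝ (fun y : H4 => w y * inner ℝ y a) y = _ := h2.fderiv
    rw [h4]
    simp [h3, hc]
    ring
  have hdg : ∀ y, fderiv ℝ (fun y : H4 => G (t • y)) y b = t • fderiv ℝ G (t • y) b := by
    intro y
    have h1 : HasFDerivAt (fun y : H4 => t • y) (t • ContinuousLinearMap.id ℝ H4) y :=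
      (hasFDerivAt_id y).const_smul t
    have h2 := ((hG.differentiable one_ne_zero) (t • y)).hasFDerivAt.comp y h1
    have h4 : fderiv ℝ (fun y : H4 => G (t • y)) y = _ := h2.fderiv
    rw [h4]
    simp
  have key := integral_smul_fderiv_eq_neg_fderiv_smul_of_integrable (μ := (volume : Measure H4))
    (f := fun y : H4 => w y * inner ℝ y a) (g := fun y : H4 => G (t • y)) (v := b)
    ?_ ?_ ?_ (fun x _ => hf.differentiable one_ne_zero x)
    (fun x _ => hg.differentiable one_ne_zero x)
  · simp only [hdf, hdg] at key
    rw [← key, ← integral_smul]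
    congr 1
    ext1 y
    rw [smul_comm]
  · apply Continuous.integrable_of_hasCompactSupport
    · exact ((hf.continuous_fderiv one_ne_zero).clm_apply continuous_const).smul hg.continuous
    · exact (hfs.fderiv_apply ℝ b).smul_right
  · apply Continuous.integrable_of_hasCompactSupport
    · exact hf.continuous.smul ((hg.continuous_fderiv one_ne_zero).clm_apply continuous_const)
    · exact hfs.smul_right
  · apply Continuous.integrable_of_hasCompactSupport
    · exact hf.continuous.smul hg.continuous
    · exact hfs.smul_right

lemma T_symm {w : H4 → ℝ} {r : ℝ} (hw : ContDiff ℝ 1 w) (hw0 : ∀ y, r ≤ ‖y‖ → w y = 0)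
    {c : H4 → ℝ} (hc : ∀ y v, fderiv ℝ w y v = c y * inner ℝ y v)
    {G : H4 → H4} (hG : ContDiff ℝ 1 G) {t : ℝ} (ht : t ≠ 0) {a b : H4}
    (hab : inner ℝ a b = (0:ℝ)) :
    ∫ y, (w y * inner ℝ y a) • fderiv ℝ G (t • y) b =
      ∫ y, (w y * inner ℝ y b) • fderiv ℝ G (t • y) a := by
  have hba : inner ℝ b a = (0:ℝ) := by rw [real_inner_comm]; exact hab
  have h1 := by_parts hw hw0 hc hG (t := t) hab
  have h2 := by_parts hw hw0 hc hG (t := t) hba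
  apply smul_right_injective H4 ht
  simp only
  rw [h1, h2]
  congr 2
  ext1 y
  congr 1
  ring

lemma deriv_A {w : H4 → ℝ} {r : ℝ} (hw : Continuous w) (hw0 : ∀ y, r ≤ ‖y‖ → w y = 0)
    {G : H4 → H4} (hG : ContDiff ℝ 1 G) (t : ℝ) :
    HasDerivAt (fun t : ℝ => ∫ y, w y • G (t • y)) (∫ y, w y • fderiv ℝ G (t • y) y) t := by
  have hcs := hcs_w hw0
  have hG' := hG.continuous_fderiv one_ne_zero
  have hcont : Continuous (fun p : ℝ × H4 => w p.2 • fderiv ℝ G (p.1 • p.2) p.2) := by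
    apply (hw.comp continuous_snd).smul
    exact (hG'.comp (continuous_fst.smul continuous_snd)).clm_apply continuous_snd
  obtain ⟨C, hC⟩ := ((isCompact_closedBall t 1).prod
    (isCompact_closedBall (0:H4) r)).exists_bound_of_continuousOn hcont.continuousOn
  refine (hasDerivAt_integral_of_dominated_loc_of_deriv_le
    (F := fun (t : ℝ) (y : H4) => w y • G (t • y))
    (F' := fun (t : ℝ) (y : H4) => w y • fderiv ℝ G (t • y) y)
    (bound := (Metric.closedBall (0:H4) r).indicator (fun _ => C))
    (Metric.closedBall_mem_nhds t one_pos) ?_ ?_ ?_ ?_ ?_ ?_).2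
  · refine Filter.Eventually.of_forall fun s => ?_
    exact (hw.smul (hG.continuous.comp (by fun_prop))).aestronglyMeasurable
  · apply Continuous.integrable_of_hasCompactSupport
    · exact (hw.smul (hG.continuous.comp (by fun_prop)))
    · exact hcs.smul_right
  · exact (hcont.comp (Continuous.prodMk_right t)).aestronglyMeasurable
  · refine Filter.Eventually.of_forall fun y s hs => ?_
    by_cases hy : y ∈ Metric.closedBall (0:H4) r
    · rw [Set.indicator_of_mem hy]
      exact hC (s, y) ⟨hs, hy⟩
    · rw [Set.indicator_of_notMem hy, hw0 y]
      · simp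
      · simp at hy; exact hy.le
  · rw [integrable_indicator_iff measurableSet_closedBall]
    exact integrableOn_const measure_closedBall_lt_top.ne
  · refine Filter.Eventually.of_forall fun y s hs => ?_
    have h1 : HasDerivAt (fun s : ℝ => s • y) y s := by
      simpa using (hasDerivAt_id s).smul_const y
    exact (((hG.differentiable one_ne_zero) (s • y)).hasFDerivAt.comp_hasDerivAt s h1).const_smul (w y)


lemma qI_comp : qI.re = 0 ∧ qI.imI = 1 ∧ qI.imJ = 0 ∧ qI.imK = 0 := ⟨rfl, rfl, rfl, rfl⟩
lemma one_comp : (1:H4).re = 0 + 1 ∧ (1:H4).imI = 0 ∧ (1:H4).imJ = 0 ∧ (1:H4).imK = 0 := by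
  refine ⟨?_, rfl, rfl, rfl⟩
  rw [zero_add]
  rfl
lemma e2_comp (θ : ℝ) : (e2 θ).re = 0 ∧ (e2 θ).imI = 0 ∧ (e2 θ).imJ = -Real.sin θ ∧
    (e2 θ).imK = Real.cos θ := by
  unfold e2
  simp only [Quaternion.re_mul, Quaternion.imI_mul, Quaternion.imJ_mul, Quaternion.imK_mul]
  simp only [qI, eIθ, qJ]
  simp
lemma e3_comp (θ : ℝ) : (e3 θ).re = 0 ∧ (e3 θ).imI = 0 ∧ (e3 θ).imJ = Real.cos θ ∧
    (e3 θ).imK = Real.sin θ := by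
  unfold e3
  simp only [Quaternion.re_mul, Quaternion.imI_mul, Quaternion.imJ_mul, Quaternion.imK_mul]
  simp only [eIθ, qJ]
  simp

lemma inner_comp (a b : H4) :
    (inner ℝ a b : ℝ) = a.re * b.re + a.imI * b.imI + a.imJ * b.imJ + a.imK * b.imK := by
  rw [Quaternion.inner_def]
  simp

lemma basis_expand (θ : ℝ) (y : H4) : y = (inner ℝ y (1:H4) : ℝ) • (1:H4) + (inner ℝ y qI : ℝ) • qI
    + (inner ℝ y (e2 θ) : ℝ) • e2 θ + (inner ℝ y (e3 θ) : ℝ) • e3 θ := by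
  have := Real.sin_sq_add_cos_sq θ
  obtain ⟨a1, a2, a3, a4⟩ := one_comp
  obtain ⟨b1, b2, b3, b4⟩ := qI_comp
  obtain ⟨c1, c2, c3, c4⟩ := e2_comp θ
  obtain ⟨d1, d2, d3, d4⟩ := e3_comp θ
  apply Quaternion.ext <;>
  simp only [Quaternion.re_add, Quaternion.imI_add, Quaternion.imJ_add, Quaternion.imK_add,
    Quaternion.re_smul, Quaternion.imI_smul, Quaternion.imJ_smul, Quaternion.imK_smul, smul_eq_mul,
    inner_comp, a1, a2, a3, a4, b1, b2, b3, b4, c1, c2, c3, c4, d1, d2, d3, d4]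
  · ring
  · ring
  · linear_combination (-y.imJ) * this
  · linear_combination (-y.imK) * this

lemma inner_basis (θ : ℝ) : inner ℝ (1:H4) qI = (0:ℝ) ∧ inner ℝ (1:H4) (e2 θ) = (0:ℝ) ∧
   inner ℝ (1:H4) (e3 θ) = (0:ℝ) ∧ inner ℝ qI (e2 θ) = (0:ℝ) ∧ inner ℝ qI (e3 θ) = (0:ℝ) ∧
   inner ℝ (e2 θ) (e3 θ) = (0:ℝ) := by
  obtain ⟨a1, a2, a3, a4⟩ := one_comp
  obtain ⟨b1, b2, b3, b4⟩ := qI_comp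
  obtain ⟨c1, c2, c3, c4⟩ := e2_comp θ
  obtain ⟨d1, d2, d3, d4⟩ := e3_comp θ
  simp only [inner_comp, a1, a2, a3, a4, b1, b2, b3, b4, c1, c2, c3, c4, d1, d2, d3, d4]
  refine ⟨?_, ?_, ?_, ?_, ?_, ?_⟩ <;> ring

lemma star_basis (a b : H4) : star a * b + star b * a = ((2 * inner ℝ a b : ℝ) : H4) := by
  rw [inner_comp]
  apply Quaternion.ext <;> simp <;> ring

lemma star_mul_basis (θ : ℝ) : star (qI) * qI = 1 ∧ star (e2 θ) * e2 θ = 1 ∧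
    star (e3 θ) * e3 θ = 1 := by
  have := Real.sin_sq_add_cos_sq θ
  obtain ⟨b1, b2, b3, b4⟩ := qI_comp
  obtain ⟨c1, c2, c3, c4⟩ := e2_comp θ
  obtain ⟨d1, d2, d3, d4⟩ := e3_comp θ
  have key : ∀ a : H4, a.re * a.re + a.imI * a.imI + a.imJ * a.imJ + a.imK * a.imK = 1 →
      star a * a = 1 := by
    intro a ha
    rw [Quaternion.star_mul_self, Quaternion.normSq_def', ← Quaternion.coe_one]
    congr 1
    linarith
  refine ⟨key _ ?_, key _ ?_, key _ ?_⟩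
  · rw [b1, b2, b3, b4]; norm_num
  · rw [c1, c2, c3, c4]; linear_combination this
  · rw [d1, d2, d3, d4]; linear_combination this

lemma alg_fact (b c d : H4) (hb : star b * b = 1) (hc : star c * c = 1) (hd : star d * d = 1)
    (h1b : inner ℝ (1:H4) b = (0:ℝ)) (h1c : inner ℝ (1:H4) c = (0:ℝ))
    (h1d : inner ℝ (1:H4) d = (0:ℝ)) (hbc : inner ℝ b c = (0:ℝ)) (hbd : inner ℝ b d = (0:ℝ))
    (hcd : inner ℝ c d = (0:ℝ)) (T11 T1b T1c T1d Tbb Tbc Tbd Tcc Tcd Tdd : H4)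
    (E1 : T11 + b * T1b + c * T1c + d * T1d = 0)
    (E2 : T1b + b * Tbb + c * Tbc + d * Tbd = 0)
    (E3 : T1c + b * Tbc + c * Tcc + d * Tcd = 0)
    (E4 : T1d + b * Tbd + c * Tcd + d * Tdd = 0) : T11 + Tbb + Tcc + Tdd = 0 := by
  have f1 := star_basis 1 b
  have f2 := star_basis 1 c
  have f3 := star_basis 1 d
  have f4 := star_basis b c
  have f5 := star_basis b d
  have f6 := star_basis c d
  rw [h1b] at f1
  rw [h1c] at f2
  rw [h1d] at f3
  rw [hbc] at f4
  rw [hbd] at f5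
  rw [hcd] at f6
  simp only [star_one, one_mul, mul_one, mul_zero, Quaternion.coe_zero] at f1 f2 f3 f4 f5 f6
  have h : (T11 + b * T1b + c * T1c + d * T1d) + star b * (T1b + b * Tbb + c * Tbc + d * Tbd)
    + star c * (T1c + b * Tbc + c * Tcc + d * Tcd) + star d * (T1d + b * Tbd + c * Tcd + d * Tdd)
    = T11 + (star b * b) * Tbb + (star c * c) * Tcc + (star d * d) * Tdd
      + (b + star b) * T1b + (c + star c) * T1c + (d + star d) * T1d
      + (star b * c + star c * b) * Tbc + (star b * d + star d * b) * Tbd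
      + (star c * d + star d * c) * Tcd := by noncomm_ring
  rw [E1, E2, E3, E4, f1, f2, f3, f4, f5, f6, hb, hc, hd] at h
  simpa using h.symm

lemma int_add4 {a b c d : H4 → H4} (ha : Integrable a) (hb : Integrable b) (hc : Integrable c)
    (hd : Integrable d) : (∫ y, a y) + (∫ y, b y) + (∫ y, c y) + (∫ y, d y) =
      ∫ y, (a y + b y + c y + d y) := by
  have h1 : Integrable (fun y => a y + b y) := ha.add hb
  have h2 : Integrable (fun y => a y + b y + c y) := h1.add hc
  rw [integral_add h2 hd, integral_add h1 hc, integral_add ha hb]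

lemma derivA_zero (θ : ℝ) {w : H4 → ℝ} {r : ℝ} (hw : ContDiff ℝ 1 w)
    (hw0 : ∀ y, r ≤ ‖y‖ → w y = 0)
    {c : H4 → ℝ} (hc : ∀ y v, fderiv ℝ w y v = c y * inner ℝ y v)
    {G : H4 → H4} (hG : ContDiff ℝ 1 G) {t : ℝ} (ht : 0 < t) (ht1 : t ≤ 1)
    (hD : ∀ y, ‖y‖ < r → Dl θ G y = 0) :
    ∫ y, w y • fderiv ℝ G (t • y) y = 0 := by
  have hcs := hcs_w hw0
  have hint : ∀ a b : H4, Integrable (fun y : H4 => (w y * inner ℝ y a) • fderiv ℝ G (t • y) b) := by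
    intro a b
    apply Continuous.integrable_of_hasCompactSupport
    · refine (hw.continuous.mul (continuous_id.inner continuous_const)).smul ?_
      exact ((hG.continuous_fderiv one_ne_zero).comp (continuous_const_smul t)).clm_apply
        continuous_const
    · exact hcs.mul_right.smul_right
  have hsum : ∫ y, w y • fderiv ℝ G (t • y) y =
      (∫ y, (w y * inner ℝ y (1:H4)) • fderiv ℝ G (t • y) 1)
      + (∫ y, (w y * inner ℝ y qI) • fderiv ℝ G (t • y) qI)
      + (∫ y, (w y * inner ℝ y (e2 θ)) • fderiv ℝ G (t • y) (e2 θ))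
      + (∫ y, (w y * inner ℝ y (e3 θ)) • fderiv ℝ G (t • y) (e3 θ)) := by
    rw [int_add4 (hint _ _) (hint _ _) (hint _ _) (hint _ _)]
    congr 1
    ext1 y
    conv_lhs => rw [show fderiv ℝ G (t • y) y = fderiv ℝ G (t • y) (_) from
      congrArg _ (basis_expand θ y)]
    simp only [map_add, map_smul, smul_add, mul_smul]
  have hrow : ∀ a : H4, (∫ y, (w y * inner ℝ y a) • fderiv ℝ G (t • y) 1)
      + qI * (∫ y, (w y * inner ℝ y a) • fderiv ℝ G (t • y) qI)
      + e2 θ * (∫ y, (w y * inner ℝ y a) • fderiv ℝ G (t • y) (e2 θ))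
      + e3 θ * (∫ y, (w y * inner ℝ y a) • fderiv ℝ G (t • y) (e3 θ)) = 0 := by
    intro a
    have hm : ∀ e b : H4, e * (∫ y, (w y * inner ℝ y a) • fderiv ℝ G (t • y) b) =
        ∫ y, (w y * inner ℝ y a) • (e * fderiv ℝ G (t • y) b) := by
      intro e b
      have := (ContinuousLinearMap.mul ℝ H4 e).integral_comp_comm (hint a b)
      simpa using this.symm
    have hint2 : ∀ e b : H4,
        Integrable (fun y : H4 => (w y * inner ℝ y a) • (e * fderiv ℝ G (t • y) b)) := by
      intro e b
      simpa using (ContinuousLinearMap.mul ℝ H4 e).integrable_comp (hint a b)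
    rw [hm, hm, hm]
    rw [int_add4 (hint _ _) (hint2 _ _) (hint2 _ _) (hint2 _ _)]
    rw [← integral_zero H4 H4 (μ := volume)]
    congr 1
    ext1 y
    rw [← smul_add, ← smul_add, ← smul_add]
    by_cases hy : r ≤ ‖y‖
    · rw [hw0 y hy]; simp
    · have := hD (t • y) (by
        rw [norm_smul, Real.norm_of_nonneg ht.le]
        push Not at hy
        nlinarith [norm_nonneg y])
      unfold Dl at this
      rw [this, smul_zero]
  obtain ⟨i1, i2, i3, i4, i5, i6⟩ := inner_basis θ
  obtain ⟨s1, s2, s3⟩ := star_mul_basis θ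
  rw [hsum]
  have hs := fun {a b : H4} (h : inner ℝ a b = (0:ℝ)) => T_symm hw hw0 hc hG ht.ne' h
  have r1 := hrow 1
  have r2 := hrow qI
  have r3 := hrow (e2 θ)
  have r4 := hrow (e3 θ)
  rw [← hs i1] at r2
  rw [← hs i2, ← hs i4] at r3
  rw [← hs i3, ← hs i5, ← hs i6] at r4
  exact alg_fact qI (e2 θ) (e3 θ) s1 s2 s3 i1 i2 i3 i4 i5 i6 _ _ _ _ _ _ _ _ _ _ r1 r2 r3 r4

lemma mean_value (θ : ℝ) {w : H4 → ℝ} {r : ℝ} (hw : ContDiff ℝ 1 w)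
    (hw0 : ∀ y, r ≤ ‖y‖ → w y = 0)
    {c : H4 → ℝ} (hc : ∀ y v, fderiv ℝ w y v = c y * inner ℝ y v)
    {G : H4 → H4} (hG : ContDiff ℝ 1 G)
    (hD : ∀ y, ‖y‖ < r → Dl θ G y = 0) :
    (∫ y, w y) • G 0 = ∫ y, w y • G y := by
  have hA := deriv_A hw.continuous hw0 hG
  have hAc : Continuous (fun t : ℝ => ∫ y, w y • G (t • y)) :=
    continuous_iff_continuousAt.2 fun t => (hA t).continuousAt
  have hconst : ∀ s : ℝ, 0 < s → s ≤ 1 → ∫ y, w y • G (s • y) = ∫ y, w y • G y := by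
    intro s hs hs1
    have := constant_of_has_deriv_right_zero (f := fun t : ℝ => ∫ y, w y • G (t • y))
      (a := s) (b := 1) hAc.continuousOn (fun x hx => by
        have h := hA x
        rw [derivA_zero θ hw hw0 hc hG (hs.trans_le hx.1) hx.2.le hD] at h
        exact h.hasDerivWithinAt) 1 ⟨hs1, le_rfl⟩
    simpa using this.symm
  have h1 : Filter.Tendsto (fun t : ℝ => ∫ y, w y • G (t • y)) (nhdsWithin 0 (Set.Ioi 0))
      (nhds (∫ y, w y • G ((0:ℝ) • y))) := (hAc.tendsto 0).mono_left nhdsWithin_le_nhds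
  have h2 : Filter.Tendsto (fun t : ℝ => ∫ y, w y • G (t • y)) (nhdsWithin 0 (Set.Ioi 0))
      (nhds (∫ y, w y • G y)) := by
    refine tendsto_const_nhds.congr' ?_
    filter_upwards [Ioc_mem_nhdsGT (zero_lt_one' ℝ)] with s hs
    exact (hconst s hs.1 hs.2).symm
  have h3 := tendsto_nhds_unique h1 h2
  rw [← h3]
  simp only [zero_smul]
  rw [integral_smul_const]

/-- radial weight -/
def wt (r : ℝ) (y : H4) : ℝ := Real.smoothTransition (r ^ 2 - ‖y‖ ^ 2)

lemma wt_contDiff (r : ℝ) : ContDiff ℝ 1 (wt r) := by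
  have h : ContDiff ℝ 1 (fun y : H4 => r ^ 2 - ‖y‖ ^ 2) := contDiff_const.sub (contDiff_norm_sq ℝ)
  exact (Real.smoothTransition.contDiff (n := 1)).comp h

lemma wt_zero {r : ℝ} (hr : 0 < r) (y : H4) (hy : r ≤ ‖y‖) : wt r y = 0 := by
  apply Real.smoothTransition.zero_of_nonpos
  nlinarith

lemma wt_fderiv (r : ℝ) (y v : H4) : fderiv ℝ (wt r) y v =
    (-2 * deriv Real.smoothTransition (r ^ 2 - ‖y‖ ^ 2)) * inner ℝ y v := by
  have h1 : HasFDerivAt (fun y : H4 => r ^ 2 - ‖y‖ ^ 2) (-(2 • innerSL ℝ y)) y :=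
    (hasStrictFDerivAt_norm_sq y).hasFDerivAt.const_sub _
  have h2 : DifferentiableAt ℝ Real.smoothTransition (r ^ 2 - ‖y‖ ^ 2) :=
    ((Real.smoothTransition.contDiff (n := 1)).differentiable (by norm_num)) _
  have h3 : HasFDerivAt (wt r) _ y := h2.hasDerivAt.comp_hasFDerivAt y h1
  rw [h3.fderiv]
  simp
  ring

lemma wt_integral_pos {r : ℝ} (hr : 0 < r) : 0 < ∫ y, wt r y := by
  apply Continuous.integral_pos_of_hasCompactSupport_nonneg_nonzero (x := 0)
  · exact (wt_contDiff r).continuous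
  · exact hcs_w (wt_zero hr)
  · intro y
    exact Real.smoothTransition.nonneg _
  · apply ne_of_gt
    apply Real.smoothTransition.pos_of_pos
    simp
    positivity
lemma cs_aux {α : Type*} [MeasurableSpace α] (μ : Measure α) [IsFiniteMeasure μ] {h : α → ℝ}
    (hV : 0 < μ.real Set.univ) (h1 : Integrable h μ) (h2 : Integrable (fun x => h x ^ 2) μ) :
    ∫ x, h x ∂μ ≤ Real.sqrt (μ.real Set.univ) * Real.sqrt (∫ x, h x ^ 2 ∂μ) := by
  set I := ∫ x, h x ∂μ with hI
  set J := ∫ x, h x ^ 2 ∂μ with hJ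
  set V := μ.real Set.univ with hVd
  have key : ∀ s : ℝ, 0 ≤ J - 2 * s * I + s ^ 2 * V := by
    intro s
    have h3 : 0 ≤ ∫ x, (h x ^ 2 - (2 * s) * h x + s ^ 2) ∂μ := by
      apply integral_nonneg
      intro x
      show 0 ≤ h x ^ 2 - (2 * s) * h x + s ^ 2
      nlinarith [sq_nonneg (h x - s)]
    have h6 : Integrable (fun x => h x ^ 2 - (2 * s) * h x) μ := h2.sub (h1.const_mul (2 * s))
    rw [integral_add h6 (integrable_const _),
      integral_sub h2 (h1.const_mul (2 * s)), integral_const_mul, integral_const] at h3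
    simp only [smul_eq_mul] at h3
    linarith [mul_comm V (s ^ 2)]
  have h4 := key (I / V)
  have h5 : I ^ 2 ≤ V * J := by
    have : J - 2 * (I / V) * I + (I / V) ^ 2 * V = (V * J - I ^ 2) / V := by
      field_simp
      ring
    rw [this] at h4
    by_contra hcon
    have : (V * J - I ^ 2) / V < 0 := div_neg_of_neg_of_pos (by linarith) hV
    linarith
  rw [← Real.sqrt_mul hV.le]
  exact Real.le_sqrt_of_sq_le h5

/-- the gauge-transformed function -/
lemma Dl_gauge (θ : ℝ) (u z : H4) (f : H4 → H4) (y : H4) (hf : DifferentiableAt ℝ f (z + y))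
    (G : H4 → H4)
    (hG : G =ᶠ[nhds y] fun y => Real.exp (inner ℝ u y) • f (z + y)) :
    Dl θ G y = Real.exp (inner ℝ u y) • Dlu θ u f (z + y) := by
  have h1 : HasFDerivAt (fun y : H4 => (inner ℝ u y : ℝ)) (innerSL ℝ u) y :=
    (innerSL ℝ u).hasFDerivAt (x := y)
  have h2 := h1.exp
  have h3 : HasFDerivAt (fun y => f (z + y)) (fderiv ℝ f (z + y)) y := by
    rw [hasFDerivAt_comp_add_left]
    exact hf.hasFDerivAt
  have h4 := h2.fun_smul h3
  have h5 : ∀ v, fderiv ℝ G y v =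
      Real.exp (inner ℝ u y) • (fderiv ℝ f (z + y) v + (inner ℝ u v : ℝ) • f (z + y)) := by
    intro v
    rw [hG.fderiv_eq, h4.fderiv]
    simp [mul_smul]
  unfold Dlu Dl
  rw [h5, h5, h5, h5]
  have h6 : u * f (z + y) = ((inner ℝ u (1:H4) : ℝ) • (1:H4) + (inner ℝ u qI : ℝ) • qI
    + (inner ℝ u (e2 θ) : ℝ) • e2 θ + (inner ℝ u (e3 θ) : ℝ) • e3 θ) * f (z + y) :=
    congrArg (· * f (z + y)) (basis_expand θ u)
  rw [h6]
  simp only [add_mul, smul_mul_assoc, mul_smul_comm, mul_add, one_mul, smul_add]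
  abel

/-- local boundedness of the evaluation: if `closedBall z ε ⊆ Ω` then there is
`k > 0` with `|f(z)| ≤ k (∫_{B(z,ε)} |f|² dμ)^{1/2}` for every (θ,u)-hyperholomorphic f. -/
theorem statement6 (Ω : Set H4) (hΩo : IsOpen Ω) (hΩc : IsConnected Ω)
    (θ : ℝ) (hθ : θ ∈ Set.Ico 0 (2 * Real.pi)) (u : H4)
    (z : H4) (ε : ℝ) (hε : 0 < ε) (hball : Metric.closedBall z ε ⊆ Ω) :
    ∃ k > (0 : ℝ), ∀ f : H4 → H4, ContDiffOn ℝ 1 f Ω → (∀ w ∈ Ω, Dlu θ u f w = 0) →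
      ‖f z‖ ≤ k * Real.sqrt (∫ ζ in Metric.ball z ε, ‖f ζ‖ ^ 2) := by
  have hr : 0 < ε / 2 := by positivity
  have hW := wt_integral_pos hr
  have hV : 0 < (volume : Measure H4).real (Metric.ball z ε) :=
    ENNReal.toReal_pos (Metric.measure_ball_pos volume z hε).ne' measure_ball_lt_top.ne
  set V := (volume : Measure H4).real (Metric.ball z ε) with hVdef
  set W := ∫ y, wt (ε / 2) y with hWdef
  refine ⟨Real.exp (‖u‖ * ε) * Real.sqrt V / W, by positivity, ?_⟩
  intro f hf hDf
  let χ : ContDiffBump (0 : H4) := ⟨ε / 2, 3 * ε / 4, hr, by linarith⟩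
  let G : H4 → H4 := fun y => χ y • (Real.exp (inner ℝ u y) • f (z + y))
  have hmem : ∀ y : H4, ‖y‖ < ε → z + y ∈ Ω := by
    intro y hy
    apply hball
    simp [Metric.mem_closedBall, dist_eq_norm, hy.le]
  have hfat : ∀ y : H4, ‖y‖ < ε → ContDiffAt ℝ 1 f (z + y) := fun y hy =>
    hf.contDiffAt (hΩo.mem_nhds (hmem y hy))
  have hG : ContDiff ℝ 1 G := by
    rw [contDiff_iff_contDiffAt]
    intro y
    by_cases hy : ‖y‖ < ε
    · apply ContDiffAt.smul χ.contDiff.contDiffAt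
      refine ContDiffAt.smul (f := fun y : H4 => Real.exp (inner ℝ u y))
        (g := fun y => f (z + y)) ?_ ?_
      · exact (contDiff_const.inner ℝ contDiff_id).exp.contDiffAt
      · exact (hfat y hy).comp y (contDiffAt_const.add contDiffAt_id)
    · have h0 : G =ᶠ[nhds y] fun _ => 0 := by
        have hop : {x : H4 | 3 * ε / 4 < ‖x‖} ∈ nhds y := by
          refine (isOpen_lt continuous_const continuous_norm).mem_nhds ?_
          simp only [Set.mem_ofPred_eq]
          linarith
        filter_upwards [hop] with x hx
        have : χ x = 0 := χ.zero_of_le_dist (by simpa using le_of_lt hx)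
        simp [G, this]
      exact contDiffAt_const.congr_of_eventuallyEq h0
  have hGeq : ∀ y : H4, ‖y‖ < ε / 2 → G y = Real.exp (inner ℝ u y) • f (z + y) := by
    intro y hy
    have : χ y = 1 := χ.one_of_mem_closedBall (by simpa [χ] using hy.le)
    simp [G, this]
  have hD : ∀ y, ‖y‖ < ε / 2 → Dl θ G y = 0 := by
    intro y hy
    have hy' : ‖y‖ < ε := by linarith
    rw [Dl_gauge θ u z f y ((hfat y hy').differentiableAt one_ne_zero) G, hDf _ (hmem y hy'), smul_zero]
    have hop : {x : H4 | ‖x‖ < ε / 2} ∈ nhds y :=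
      (isOpen_lt continuous_norm continuous_const).mem_nhds hy
    filter_upwards [hop] with x hx
    exact hGeq x hx
  have hmv := mean_value θ (wt_contDiff (ε / 2)) (wt_zero hr) (wt_fderiv (ε / 2)) hG hD
  have hG0 : G 0 = f z := by
    rw [hGeq 0 (by simpa using hr)]
    simp
  rw [hG0, ← hWdef, ← integral_sub_right_eq_self _ z] at hmv
  have hfc : ContinuousOn f (Metric.closedBall z ε) := hf.continuousOn.mono hball
  have hi1 : IntegrableOn (fun y => ‖f y‖) (Metric.ball z ε) :=
    (hfc.norm.integrableOn_compact (isCompact_closedBall z ε)).mono_set Metric.ball_subset_closedBall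
  have hi2 : IntegrableOn (fun y => ‖f y‖ ^ 2) (Metric.ball z ε) :=
    ((hfc.norm.pow 2).integrableOn_compact (isCompact_closedBall z ε)).mono_set
      Metric.ball_subset_closedBall
  have hzero : ∀ y, y ∉ Metric.ball z (ε / 2) → wt (ε / 2) (y - z) = 0 := by
    intro y hy
    apply wt_zero hr
    rw [Metric.mem_ball, dist_eq_norm] at hy
    linarith
  have hle : ∀ y, ‖wt (ε / 2) (y - z) • G (y - z)‖ ≤ Real.exp (‖u‖ * ε) * ‖f y‖ := by
    intro y
    by_cases hy : y ∈ Metric.ball z (ε / 2)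
    · rw [Metric.mem_ball, dist_eq_norm] at hy
      rw [hGeq _ hy, norm_smul, norm_smul, add_sub_cancel, Real.norm_of_nonneg (Real.exp_pos _).le,
        Real.norm_of_nonneg (show 0 ≤ wt (ε / 2) (y - z) from Real.smoothTransition.nonneg _)]
      have h1 : wt (ε / 2) (y - z) ≤ 1 := Real.smoothTransition.le_one _
      have h2 : Real.exp (inner ℝ u (y - z)) ≤ Real.exp (‖u‖ * ε) := by
        apply Real.exp_le_exp.2
        refine (real_inner_le_norm _ _).trans ?_
        gcongr
        linarith
      calc wt (ε / 2) (y - z) * (Real.exp (inner ℝ u (y - z)) * ‖f y‖)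
          ≤ 1 * (Real.exp (inner ℝ u (y - z)) * ‖f y‖) := by gcongr
        _ ≤ Real.exp (‖u‖ * ε) * ‖f y‖ := by rw [one_mul]; gcongr
    · rw [hzero y hy, zero_smul, norm_zero]
      positivity
  haveI : IsFiniteMeasure ((volume : Measure H4).restrict (Metric.ball z ε)) :=
    isFiniteMeasure_restrict.2 measure_ball_lt_top.ne
  have hcs := cs_aux ((volume : Measure H4).restrict (Metric.ball z ε)) (h := fun y => ‖f y‖)
    (by simpa using hV) hi1 hi2
  rw [show ((volume : Measure H4).restrict (Metric.ball z ε)).real Set.univ = V by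
    simp [hVdef]] at hcs
  have hfin : W * ‖f z‖ ≤ Real.exp (‖u‖ * ε) * ∫ y in Metric.ball z ε, ‖f y‖ := by
    calc W * ‖f z‖ = ‖W • f z‖ := by rw [norm_smul, Real.norm_of_nonneg hW.le]
      _ = ‖∫ y in Metric.ball z ε, wt (ε / 2) (y - z) • G (y - z)‖ := by
          rw [hmv, setIntegral_eq_integral_of_forall_compl_eq_zero]
          intro y hy
          rw [hzero y, zero_smul]
          exact fun h => hy (Metric.ball_subset_ball (by linarith) h)
      _ ≤ ∫ y in Metric.ball z ε, Real.exp (‖u‖ * ε) * ‖f y‖ :=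
          norm_integral_le_of_norm_le (hi1.const_mul _) (Filter.Eventually.of_forall hle)
      _ = _ := integral_const_mul _ _
  rw [div_mul_eq_mul_div, le_div_iff₀ hW]
  calc ‖f z‖ * W = W * ‖f z‖ := mul_comm _ _
    _ ≤ _ := hfin
    _ ≤ Real.exp (‖u‖ * ε) * (Real.sqrt V * Real.sqrt (∫ y in Metric.ball z ε, ‖f y‖ ^ 2)) := by
        gcongr
    _ = _ := by ring

end
end
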